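/- Let d ≥ 1 and s ∈ (0,1). There exists a constant C > 0, depending only on d and s, such that for every u ∈ C_c^∞(ℝ^d): ∫_{ℝ^d} ∫_{ℝ^d} |u(x) - u(y)|² / |x - y|^{d+2s} dx dy = C ∫_{ℝ^d} |∇^s u(x)|² dx; that is, the squared Gagliardo seminorm [u]²_{s,ℝ^d} equals a dimensional constant times the squared L² norm of the Riesz fractional gradient. -/

import Mathlib

/-!
Both sides are constant multiples of `∫ |ξ|^(2s) |û(ξ)|² dξ`. By Plancherel in `x` for each fixed
`h`, the Gagliardo energy `∫∫ |u(x) - u(x - h)|² |h|^(-d-2s)` has the Fourier density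
`2 ∫ (1 - cos 2π⟨h, ξ⟩) |h|^(-d-2s) dh`, which is rotation invariant and homogeneous of degree
`2s` in `ξ`, hence a positive multiple of `|ξ|^(2s)`. The fractional gradient is the multiplier with
symbol `i μ_s ∫ sin 2π⟨h, ξ⟩ |h|^(-d-s-1) h dh`. Up to a constant factor this vector is the
gradient in `ξ` of the scalar integral `∫ (1 - cos 2π⟨h, ξ⟩) |h|^(-d-s-1) dh = c |ξ|^(s+1)`, so its
norm is a nonzero multiple of `|ξ|^s`.
-/

open MeasureTheory Filter Topology

noncomputable section

/-- The normalising constant `μ_s` of the Riesz fractional operators. -/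
def muS (d : ℕ) (s : ℝ) : ℝ :=
  2 ^ s * Real.pi ^ (-(d : ℝ) / 2) * Real.Gamma (((d : ℝ) + s + 1) / 2) /
    Real.Gamma ((1 - s) / 2)

/-- The Riesz fractional gradient `∇^s u (x)`. -/
def fracGrad (d : ℕ) (s : ℝ) (u : EuclideanSpace ℝ (Fin d) → ℝ)
    (x : EuclideanSpace ℝ (Fin d)) : EuclideanSpace ℝ (Fin d) :=
  muS d s • ∫ y, (‖x - y‖ ^ ((d : ℝ) + s + 1))⁻¹ • ((u x - u y) • (x - y))

theorem Lp_norm_sq_eq_integral {α F : Type*} [MeasurableSpace α] {μ : Measure α}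
    [NormedAddCommGroup F] (f : Lp F 2 μ) : ‖f‖ ^ 2 = ∫ x, ‖f x‖ ^ 2 ∂μ := by
  have hnorm : ‖f‖ = (∫ x, ‖f x‖ ^ (2 : ℝ) ∂μ) ^ (2⁻¹ : ℝ) := by
    rw [Lp.norm_def, toReal_eLpNorm (Lp.aestronglyMeasurable f)]
    exact lpNorm_nnreal_eq_integral_norm_rpow two_ne_zero (Lp.aestronglyMeasurable f)
  rw [hnorm, ← Real.rpow_mul_natCast (by positivity)]
  norm_num

section Plancherel

open scoped FourierTransform SchwartzMap ContDiff ENNReal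

variable {E V : Type*} [NormedAddCommGroup E] [InnerProductSpace ℝ E] [FiniteDimensional ℝ E]
  [MeasurableSpace E] [BorelSpace E]
  [NormedAddCommGroup V] [InnerProductSpace ℂ V] [CompleteSpace V]

theorem integral_smul_fourier_eq_flip (φ : 𝓢(E, ℂ)) {g : E → V} (hg : Integrable g) :
    ∫ ξ, φ ξ • 𝓕 g ξ = ∫ x, (𝓕 φ) x • g x := by
  have h := VectorFourier.integral_fourierIntegral_smul_eq_flip (μ := volume) (ν := volume)
    (L := innerₗ E) Real.continuous_fourierChar continuous_inner φ.integrable hg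
  rw [flip_innerₗ] at h
  simpa only [SchwartzMap.fourier_coe] using! h.symm

theorem coeFn_fourier_toLp_ae_eq {g : E → V} (h1 : Integrable g) (h2 : MemLp g 2) :
    ⇑(𝓕 (h2.toLp g) : Lp V 2 (volume : Measure E)) =ᵐ[volume] 𝓕 g := by
  have hcont : Continuous (𝓕 g) :=
    VectorFourier.fourierIntegral_continuous Real.continuous_fourierChar continuous_inner h1
  refine ae_eq_of_integral_contDiff_smul_eq
    ((Lp.memLp _).locallyIntegrable one_le_two) hcont.locallyIntegrable fun φ hφ hφc ↦ ?_
  have hc : HasCompactSupport (Complex.ofRealCLM ∘ φ) := hφc.comp_left rfl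
  let ψ : 𝓢(E, ℂ) := hc.toSchwartzMap (Complex.ofRealCLM.contDiff.comp hφ)
  calc ∫ ξ, φ ξ • (𝓕 (h2.toLp g) : Lp V 2 (volume : Measure E)) ξ
      = Lp.toTemperedDistribution (𝓕 (h2.toLp g)) ψ := by
        simp [ψ, Lp.toTemperedDistribution_apply]
    _ = ∫ x, (𝓕 ψ) x • h2.toLp g x := by
        rw [← Lp.fourier_toTemperedDistribution_eq, TemperedDistribution.fourier_apply,
          Lp.toTemperedDistribution_apply]
    _ = ∫ x, (𝓕 ψ) x • g x :=
        integral_congr_ae (h2.coeFn_toLp.mono fun x hx ↦ congrArg ((𝓕 ψ) x • ·) hx)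
    _ = ∫ ξ, ψ ξ • 𝓕 g ξ := (integral_smul_fourier_eq_flip ψ h1).symm
    _ = ∫ ξ, φ ξ • 𝓕 g ξ := by simp [ψ]

theorem integral_norm_sq_fourier {g : E → V} (h1 : Integrable g) (h2 : MemLp g 2) :
    ∫ ξ, ‖𝓕 g ξ‖ ^ 2 = ∫ x, ‖g x‖ ^ 2 := by
  calc ∫ ξ, ‖𝓕 g ξ‖ ^ 2
      = ∫ ξ, ‖(𝓕 (h2.toLp g) : Lp V 2 (volume : Measure E)) ξ‖ ^ 2 :=
        integral_congr_ae ((coeFn_fourier_toLp_ae_eq h1 h2).symm.mono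
          fun ξ hξ ↦ congrArg (‖·‖ ^ 2) hξ)
    _ = ∫ x, ‖h2.toLp g x‖ ^ 2 := by
        rw [← Lp_norm_sq_eq_integral, Lp.norm_fourier_eq, Lp_norm_sq_eq_integral]
    _ = ∫ x, ‖g x‖ ^ 2 :=
        integral_congr_ae (h2.coeFn_toLp.mono fun x hx ↦ congrArg (‖·‖ ^ 2) hx)

theorem integral_norm_sq_fourierInv {g : E → V} (h1 : Integrable g) (h2 : MemLp g 2) :
    ∫ x, ‖𝓕⁻ g x‖ ^ 2 = ∫ ξ, ‖g ξ‖ ^ 2 := by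
  simp only [Real.fourierInv_eq_fourier_neg]
  rw [integral_neg_eq_self (fun ξ ↦ ‖𝓕 g ξ‖ ^ 2), integral_norm_sq_fourier h1 h2]

end Plancherel

section TranslationSymbol

open scoped FourierTransform SchwartzMap RealInnerProductSpace

variable {E : Type*} [NormedAddCommGroup E] [InnerProductSpace ℝ E]

/-- The Fourier symbol of the difference operator `f ↦ f - f(· - h)`. -/
def translationSymbol (h ξ : E) : ℂ := 1 - 𝐞 (-⟪h, ξ⟫)

theorem translationSymbol_eq (h ξ : E) :
    translationSymbol h ξ = ((1 - Real.cos (2 * Real.pi * ⟪h, ξ⟫) : ℝ) : ℂ) +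
      Real.sin (2 * Real.pi * ⟪h, ξ⟫) * Complex.I := by
  rw [translationSymbol, Real.fourierChar_apply, Complex.exp_mul_I]
  push_cast
  rw [mul_neg, Complex.cos_neg, Complex.sin_neg]
  ring

theorem norm_translationSymbol_sq (h ξ : E) :
    ‖translationSymbol h ξ‖ ^ 2 = 2 * (1 - Real.cos (2 * Real.pi * ⟪h, ξ⟫)) := by
  rw [translationSymbol_eq, Complex.sq_norm, Complex.normSq_add_mul_I]
  linear_combination Real.sin_sq_add_cos_sq (2 * Real.pi * ⟪h, ξ⟫)

theorem continuous_translationSymbol :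
    Continuous fun p : E × E ↦ translationSymbol p.1 p.2 := by
  unfold translationSymbol
  fun_prop

theorem norm_translationSymbol_le (h ξ : E) :
    ‖translationSymbol h ξ‖ ≤ 2 * Real.pi * (1 + ‖ξ‖ ^ 2) * min 1 ‖h‖ := by
  have hinner : ‖translationSymbol h ξ‖ ≤ 2 * Real.pi * (‖ξ‖ * ‖h‖) := by
    have hle := Real.norm_exp_I_mul_ofReal_sub_one_le (x := 2 * Real.pi * -⟪h, ξ⟫)
    rw [norm_sub_rev, mul_comm Complex.I, ← Real.fourierChar_apply, norm_mul, norm_neg,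
      Real.norm_of_nonneg Real.two_pi_pos.le] at hle
    refine hle.trans ?_
    gcongr
    exact (norm_inner_le_norm h ξ).trans_eq (mul_comm _ _)
  have htwo : ‖translationSymbol h ξ‖ ≤ 2 := by
    refine (norm_sub_le _ _).trans_eq ?_
    rw [norm_one, Circle.norm_coe]
    norm_num
  rcases le_total 1 ‖h‖ with hh | hh
  · rw [min_eq_left hh]
    nlinarith [Real.pi_gt_three, sq_nonneg ‖ξ‖]
  · rw [min_eq_right hh]
    refine hinner.trans ?_
    rw [mul_assoc (2 * Real.pi)]
    gcongr
    nlinarith [sq_nonneg (‖ξ‖ - 1)]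

variable [FiniteDimensional ℝ E] [MeasurableSpace E] [BorelSpace E]
  {V : Type*} [NormedAddCommGroup V] [NormedSpace ℂ V]

theorem fourier_compSubConst (f : 𝓢(E, V)) (h ξ : E) :
    𝓕 (f.compSubConstCLM ℂ h) ξ = 𝐞 (-⟪h, ξ⟫) • 𝓕 f ξ := by
  simp only [SchwartzMap.fourier_coe]
  simpa [Function.comp_def, ← sub_eq_add_neg] using!
    congrFun (VectorFourier.fourierIntegral_comp_add_right 𝐞 volume (innerₗ E) f (-h)) ξ

theorem fourier_sub_compSubConst (f : 𝓢(E, V)) (h ξ : E) :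
    𝓕 (f - f.compSubConstCLM ℂ h) ξ = translationSymbol h ξ • 𝓕 f ξ := by
  have hsub : 𝓕 (f - f.compSubConstCLM ℂ h) = 𝓕 f - 𝓕 (f.compSubConstCLM ℂ h) :=
    map_sub (FourierTransform.fourierCLM ℂ 𝓢(E, V)) _ _
  rw [hsub, sub_apply, fourier_compSubConst, translationSymbol, sub_smul, one_smul,
    Circle.smul_def]

theorem sub_translate_eq_integral [CompleteSpace V] (f : 𝓢(E, V)) (h x : E) :
    f x - f (x - h) = ∫ ξ, 𝐞 ⟪ξ, x⟫ • translationSymbol h ξ • 𝓕 f ξ := by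
  have hinv := DFunLike.congr_fun
    (FourierTransform.fourierInv_fourier_eq (F := 𝓢(E, V)) (f - f.compSubConstCLM ℂ h)) x
  simp only [SchwartzMap.fourierInv_coe, Real.fourierInv_eq, fourier_sub_compSubConst] at hinv
  exact hinv.symm

theorem memLp_one_add_norm_sq_mul_norm (f : 𝓢(E, V)) (p : ENNReal) :
    MemLp (fun ξ ↦ (1 + ‖ξ‖ ^ 2) * ‖f ξ‖) p := by
  have hgrowth : (fun ξ : E ↦ 1 + ‖ξ‖ ^ 2).HasTemperateGrowth := by fun_prop
  let g : 𝓢(E, V) := SchwartzMap.smulLeftCLM V (fun ξ : E ↦ 1 + ‖ξ‖ ^ 2) f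
  have hnorm (ξ : E) : ‖g ξ‖ = (1 + ‖ξ‖ ^ 2) * ‖f ξ‖ := by
    rw [SchwartzMap.smulLeftCLM_apply_apply hgrowth, norm_smul, Real.norm_of_nonneg (by positivity)]
  simpa only [hnorm] using (g.memLp p).norm

end TranslationSymbol

section Energy

open scoped FourierTransform SchwartzMap RealInnerProductSpace

variable {E : Type*} [NormedAddCommGroup E] [InnerProductSpace ℝ E] [FiniteDimensional ℝ E]
  [MeasurableSpace E] [BorelSpace E]
  {V : Type*} [NormedAddCommGroup V] {w : E → ℝ}

theorem integrable_mul_norm_translationSymbol_sq_mul [NormedSpace ℂ V]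
    (hw : AEStronglyMeasurable w) (hint : Integrable fun h ↦ min 1 ‖h‖ ^ 2 * w h) (f : 𝓢(E, V)) :
    Integrable (fun p : E × E ↦ w p.1 * (‖translationSymbol p.1 p.2‖ ^ 2 * ‖f p.2‖ ^ 2))
      (volume.prod volume) := by
  have hf := (memLp_one_add_norm_sq_mul_norm f 2).integrable_sq
  refine ((hint.mul_prod hf).const_mul ((2 * Real.pi) ^ 2)).mono ?_
    (Eventually.of_forall fun p ↦ ?_)
  · have hsymbol := continuous_translationSymbol (E := E)
    exact hw.comp_fst.mul (Continuous.aestronglyMeasurable (by fun_prop))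
  · simp only [norm_mul, norm_pow, norm_norm]
    calc ‖w p.1‖ * (‖translationSymbol p.1 p.2‖ ^ 2 * ‖f p.2‖ ^ 2)
        ≤ ‖w p.1‖ * ((2 * Real.pi * (1 + ‖p.2‖ ^ 2) * min 1 ‖p.1‖) ^ 2 * ‖f p.2‖ ^ 2) := by
          gcongr
          exact norm_translationSymbol_le p.1 p.2
      _ = _ := by
          have hmin : 0 ≤ min 1 ‖p.1‖ := by positivity
          have hweight : 0 ≤ 1 + ‖p.2‖ ^ 2 := by positivity
          rw [Real.norm_of_nonneg Real.pi_pos.le, Real.norm_of_nonneg hmin,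
            Real.norm_of_nonneg hweight, Real.norm_ofNat]
          ring

variable [InnerProductSpace ℂ V] [CompleteSpace V]

theorem integral_norm_sub_translate_sq (f : 𝓢(E, V)) (h : E) :
    ∫ x, ‖f x - f (x - h)‖ ^ 2 = ∫ ξ, ‖translationSymbol h ξ‖ ^ 2 * ‖𝓕 f ξ‖ ^ 2 := by
  simpa only [fourier_sub_compSubConst, norm_smul, mul_pow, sub_apply,
    SchwartzMap.compSubConstCLM_apply] using
    (SchwartzMap.integral_norm_sq_fourier (f - f.compSubConstCLM ℂ h)).symm

theorem integrable_mul_norm_sub_translate_sq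
    (hw : AEStronglyMeasurable w) (hint : Integrable fun h ↦ min 1 ‖h‖ ^ 2 * w h) (f : 𝓢(E, V)) :
    Integrable (fun p : E × E ↦ w p.1 * ‖f p.2 - f (p.2 - p.1)‖ ^ 2) (volume.prod volume) := by
  have hmeas : AEStronglyMeasurable (fun p : E × E ↦ w p.1 * ‖f p.2 - f (p.2 - p.1)‖ ^ 2)
      (volume.prod volume) := by
    have hf := f.continuous
    exact hw.comp_fst.mul (Continuous.aestronglyMeasurable (by fun_prop))
  refine (integrable_prod_iff hmeas).2 ⟨Eventually.of_forall fun h ↦ ?_, ?_⟩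
  · simpa only [sub_apply, SchwartzMap.compSubConstCLM_apply] using
      (((f - f.compSubConstCLM ℂ h).memLp 2).integrable_norm_pow two_ne_zero).const_mul (w h)
  · have hnorm := (integrable_mul_norm_translationSymbol_sq_mul hw hint (𝓕 f)).norm
    simpa only [norm_mul, norm_pow, norm_norm, integral_const_mul, integral_norm_sub_translate_sq]
      using hnorm.integral_prod_left

theorem integral_integral_mul_norm_sub_translate_sq
    (hw : AEStronglyMeasurable w) (hint : Integrable fun h ↦ min 1 ‖h‖ ^ 2 * w h) (f : 𝓢(E, V)) :
    ∫ x, ∫ h, w h * ‖f x - f (x - h)‖ ^ 2 =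
      ∫ ξ, (∫ h, w h * ‖translationSymbol h ξ‖ ^ 2) * ‖𝓕 f ξ‖ ^ 2 := by
  calc ∫ x, ∫ h, w h * ‖f x - f (x - h)‖ ^ 2
      = ∫ h, ∫ x, w h * ‖f x - f (x - h)‖ ^ 2 :=
        (integral_integral_swap (integrable_mul_norm_sub_translate_sq hw hint f)).symm
    _ = ∫ h, ∫ ξ, w h * (‖translationSymbol h ξ‖ ^ 2 * ‖𝓕 f ξ‖ ^ 2) := by
        simp only [integral_const_mul, integral_norm_sub_translate_sq]
    _ = ∫ ξ, ∫ h, w h * (‖translationSymbol h ξ‖ ^ 2 * ‖𝓕 f ξ‖ ^ 2) :=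
        integral_integral_swap (integrable_mul_norm_translationSymbol_sq_mul hw hint (𝓕 f))
    _ = ∫ ξ, (∫ h, w h * ‖translationSymbol h ξ‖ ^ 2) * ‖𝓕 f ξ‖ ^ 2 := by
        simp only [← mul_assoc, integral_mul_const]

end Energy

section Multipliers

open scoped FourierTransform SchwartzMap RealInnerProductSpace

variable {E : Type*} [NormedAddCommGroup E] [InnerProductSpace ℝ E] [FiniteDimensional ℝ E]
  [MeasurableSpace E] [BorelSpace E]
  {V : Type*} [NormedAddCommGroup V]

/-- The Fourier symbol of the singular difference operator `f ↦ ∫ (f - f(· - h)) k(h) dh`. -/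
def differenceSymbol [NormedSpace ℂ V] (k : E → V) (ξ : E) : V := ∫ h, translationSymbol h ξ • k h

section NormedSpace

variable [NormedSpace ℂ V] {k : E → V}

theorem integrable_translationSymbol_mul_smul (hk : AEStronglyMeasurable k)
    (hint : Integrable fun h ↦ min 1 ‖h‖ * ‖k h‖) (f : 𝓢(E, ℂ)) :
    Integrable (fun p : E × E ↦ (translationSymbol p.1 p.2 * f p.2) • k p.1)
      (volume.prod volume) := by
  have hf := memLp_one_iff_integrable.1 (memLp_one_add_norm_sq_mul_norm f 1)
  refine ((hint.mul_prod hf).const_mul (2 * Real.pi)).mono' ?_ (Eventually.of_forall fun p ↦ ?_)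
  · exact ((continuous_translationSymbol.mul (f.continuous.comp continuous_snd)
      ).aestronglyMeasurable).smul hk.comp_fst
  · rw [norm_smul, norm_mul]
    calc ‖translationSymbol p.1 p.2‖ * ‖f p.2‖ * ‖k p.1‖
        ≤ 2 * Real.pi * (1 + ‖p.2‖ ^ 2) * min 1 ‖p.1‖ * ‖f p.2‖ * ‖k p.1‖ := by
          gcongr
          exact norm_translationSymbol_le p.1 p.2
      _ = 2 * Real.pi * (min 1 ‖p.1‖ * ‖k p.1‖ * ((1 + ‖p.2‖ ^ 2) * ‖f p.2‖)) := by ring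

theorem norm_differenceSymbol_le (hint : Integrable fun h ↦ min 1 ‖h‖ * ‖k h‖) (ξ : E) :
    ‖differenceSymbol k ξ‖ ≤
      2 * Real.pi * (∫ h, min 1 ‖h‖ * ‖k h‖) * (1 + ‖ξ‖ ^ 2) := by
  calc ‖differenceSymbol k ξ‖
      ≤ ∫ h, 2 * Real.pi * (1 + ‖ξ‖ ^ 2) * (min 1 ‖h‖ * ‖k h‖) := by
        refine norm_integral_le_of_norm_le (hint.const_mul _) (Eventually.of_forall fun h ↦ ?_)
        rw [norm_smul, ← mul_assoc]
        gcongr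
        exact norm_translationSymbol_le h ξ
    _ = 2 * Real.pi * (∫ h, min 1 ‖h‖ * ‖k h‖) * (1 + ‖ξ‖ ^ 2) := by
        rw [integral_const_mul]
        ring

theorem integral_translationSymbol_mul_smul (z : ℂ) (ξ : E) :
    ∫ h, (translationSymbol h ξ * z) • k h = z • differenceSymbol k ξ := by
  simp only [mul_comm _ z, mul_smul]
  exact integral_smul z _

theorem integrable_smul_differenceSymbol (hk : AEStronglyMeasurable k)
    (hint : Integrable fun h ↦ min 1 ‖h‖ * ‖k h‖) (f : 𝓢(E, ℂ)) :
    Integrable fun ξ ↦ f ξ • differenceSymbol k ξ := by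
  simpa only [integral_translationSymbol_mul_smul] using
    (integrable_translationSymbol_mul_smul hk hint f).integral_prod_right

theorem memLp_two_smul_differenceSymbol (hk : AEStronglyMeasurable k)
    (hint : Integrable fun h ↦ min 1 ‖h‖ * ‖k h‖) (f : 𝓢(E, ℂ)) :
    MemLp (fun ξ ↦ f ξ • differenceSymbol k ξ) 2 := by
  refine (memLp_one_add_norm_sq_mul_norm f 2).of_le_mul
    (integrable_smul_differenceSymbol hk hint f).aestronglyMeasurable
    (c := 2 * Real.pi * ∫ h, min 1 ‖h‖ * ‖k h‖) (Eventually.of_forall fun ξ ↦ ?_)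
  rw [norm_smul, Real.norm_of_nonneg (by positivity), mul_comm ‖f ξ‖, ← mul_assoc]
  gcongr
  exact norm_differenceSymbol_le hint ξ

theorem integral_sub_translate_smul [CompleteSpace V] (hk : AEStronglyMeasurable k)
    (hint : Integrable fun h ↦ min 1 ‖h‖ * ‖k h‖) (f : 𝓢(E, ℂ)) (x : E) :
    ∫ h, (f x - f (x - h)) • k h = 𝓕⁻ (fun ξ ↦ 𝓕 f ξ • differenceSymbol k ξ) x := by
  have hprod : Integrable (fun p : E × E ↦
      𝐞 ⟪p.2, x⟫ • (translationSymbol p.1 p.2 * 𝓕 f p.2) • k p.1) (volume.prod volume) := by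
    have hint' := integrable_translationSymbol_mul_smul hk hint (𝓕 f)
    refine hint'.mono ?_ (Eventually.of_forall fun p ↦ (Circle.norm_smul _ _).le)
    exact AEStronglyMeasurable.smul (Continuous.aestronglyMeasurable (by fun_prop))
      hint'.aestronglyMeasurable
  calc ∫ h, (f x - f (x - h)) • k h
      = ∫ h, ∫ ξ, 𝐞 ⟪ξ, x⟫ • (translationSymbol h ξ * 𝓕 f ξ) • k h := by
        refine integral_congr_ae (Eventually.of_forall fun h ↦ ?_)
        simp only [sub_translate_eq_integral, ← integral_smul_const, smul_assoc, smul_eq_mul]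
    _ = ∫ ξ, 𝐞 ⟪ξ, x⟫ • ∫ h, (translationSymbol h ξ * 𝓕 f ξ) • k h := by
        rw [integral_integral_swap hprod]
        simp only [Circle.smul_def, integral_smul]
    _ = 𝓕⁻ (fun ξ ↦ 𝓕 f ξ • differenceSymbol k ξ) x := by
        simp only [integral_translationSymbol_mul_smul, Real.fourierInv_eq]

end NormedSpace

theorem integral_norm_sq_integral_sub_translate_smul [InnerProductSpace ℂ V] [CompleteSpace V]
    {k : E → V} (hk : AEStronglyMeasurable k)
    (hint : Integrable fun h ↦ min 1 ‖h‖ * ‖k h‖) (f : 𝓢(E, ℂ)) :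
    ∫ x, ‖∫ h, (f x - f (x - h)) • k h‖ ^ 2 =
      ∫ ξ, ‖differenceSymbol k ξ‖ ^ 2 * ‖𝓕 f ξ‖ ^ 2 := by
  simp only [integral_sub_translate_smul hk hint]
  rw [integral_norm_sq_fourierInv (integrable_smul_differenceSymbol hk hint (𝓕 f))
    (memLp_two_smul_differenceSymbol hk hint (𝓕 f))]
  simp only [norm_smul, mul_pow, mul_comm]

end Multipliers

section RadialHomogeneous

variable {E : Type*} [NormedAddCommGroup E]

theorem norm_rpow_sub_one_smul [NormedSpace ℝ E] {a : ℝ} (ha : a ≠ 0) (x : E) :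
    ‖‖x‖ ^ (a - 1) • x‖ = ‖x‖ ^ a := by
  rw [norm_smul, Real.norm_of_nonneg (by positivity)]
  rcases eq_or_ne x 0 with rfl | hx
  · simp [Real.zero_rpow ha]
  · rw [← Real.rpow_add_one (norm_ne_zero_iff.2 hx), sub_add_cancel]

open Module in
theorem integrable_min_one_norm_pow_mul_norm_rpow [NormedSpace ℝ E] [FiniteDimensional ℝ E]
    [Nontrivial E] [MeasurableSpace E] [BorelSpace E] (μ : Measure E) [μ.IsAddHaarMeasure]
    {m : ℕ} {q : ℝ} (hq : 0 < q) (hqm : q < m) :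
    Integrable (fun h : E ↦ min 1 ‖h‖ ^ m * ‖h‖ ^ (-(finrank ℝ E + q))) μ := by
  refine (integrable_fun_norm_addHaar μ
    (f := fun r : ℝ ↦ min 1 r ^ m * r ^ (-(finrank ℝ E + q)))).2 ?_
  have hjacobian (r : ℝ) (hr : 0 < r) :
      r ^ (finrank ℝ E - 1) * r ^ (-(finrank ℝ E + q)) = r ^ (-q - 1) := by
    rw [← Real.rpow_natCast, ← Real.rpow_add hr, Nat.cast_sub finrank_pos]
    congr 1
    push_cast
    ring
  rw [← Set.Ioc_union_Ioi_eq_Ioi (zero_le_one' ℝ)]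
  refine IntegrableOn.union ?_ ?_
  · have hpow : IntegrableOn (fun r : ℝ ↦ r ^ (m - q - 1)) (Set.Ioc 0 1) :=
      (intervalIntegrable_iff_integrableOn_Ioc_of_le zero_le_one).1
        (intervalIntegral.intervalIntegrable_rpow' (by linarith))
    refine hpow.congr_fun (fun r hr ↦ ?_) measurableSet_Ioc
    simp only [smul_eq_mul]
    rw [min_eq_right hr.2, mul_left_comm, hjacobian r hr.1, ← Real.rpow_natCast,
      ← Real.rpow_add hr.1]
    congr 1
    ring
  · have hpow : IntegrableOn (fun r : ℝ ↦ r ^ (-q - 1)) (Set.Ioi 1) :=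
      integrableOn_Ioi_rpow_of_lt (by linarith) one_pos
    refine hpow.congr_fun (fun r (hr : 1 < r) ↦ ?_) measurableSet_Ioi
    simp only [smul_eq_mul]
    rw [min_eq_left hr.le, one_pow, one_mul, hjacobian r (one_pos.trans hr)]

theorem eq_mul_norm_rpow_of_isometry_invariant [InnerProductSpace ℝ E] {f : E → ℝ} {q : ℝ}
    (hisom : ∀ (L : E ≃ₗᵢ[ℝ] E) (x : E), f (L x) = f x)
    (hhom : ∀ t : ℝ, 0 < t → ∀ x, f (t • x) = t ^ q * f x) {e x : E} (he : ‖e‖ = 1) (hx : x ≠ 0) :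
    f x = f e * ‖x‖ ^ q := by
  have hnorm : ‖‖x‖ • e‖ = ‖x‖ := by rw [norm_smul, he, mul_one, norm_norm]
  have hreflection := hisom (Submodule.reflection (ℝ ∙ (‖x‖ • e - x))ᗮ) (‖x‖ • e)
  rw [Submodule.reflection_sub hnorm] at hreflection
  rw [hreflection, hhom ‖x‖ (norm_pos_iff.2 hx), mul_comm]

end RadialHomogeneous

section FracLaplacianSymbol

open Module
open scoped RealInnerProductSpace

variable {E : Type*} [NormedAddCommGroup E] [InnerProductSpace ℝ E] [FiniteDimensional ℝ E]
  [MeasurableSpace E] [BorelSpace E] {q : ℝ}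

/-- The Fourier symbol of the fractional Laplacian of order `q`, as the unnormalised singular
integral of `1 - cos`. -/
def fracLaplacianSymbol (q : ℝ) (ξ : E) : ℝ :=
  ∫ h : E, ‖h‖ ^ (-(finrank ℝ E + q)) * (1 - Real.cos (2 * Real.pi * ⟪h, ξ⟫))

theorem fracLaplacianSymbol_zero : fracLaplacianSymbol q (0 : E) = 0 := by
  simp [fracLaplacianSymbol]

theorem fracLaplacianSymbol_linearIsometryEquiv (L : E ≃ₗᵢ[ℝ] E) (ξ : E) :
    fracLaplacianSymbol q (L ξ) = fracLaplacianSymbol q ξ := by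
  rw [fracLaplacianSymbol, ← L.measurePreserving.integral_comp' (f := L.toMeasurableEquiv)]
  simp only [LinearIsometryEquiv.coe_toMeasurableEquiv, LinearIsometryEquiv.norm_map,
    LinearIsometryEquiv.inner_map_map, fracLaplacianSymbol]

theorem fracLaplacianSymbol_smul {t : ℝ} (ht : 0 < t) (ξ : E) :
    fracLaplacianSymbol q (t • ξ) = t ^ q * fracLaplacianSymbol q ξ := by
  have hscale (h : E) : ‖h‖ ^ (-(finrank ℝ E + q)) =
      t ^ (finrank ℝ E + q) * ‖t • h‖ ^ (-(finrank ℝ E + q)) := by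
    rw [norm_smul, Real.norm_of_nonneg ht.le, Real.mul_rpow ht.le (norm_nonneg h), ← mul_assoc,
      ← Real.rpow_add ht, add_neg_cancel, Real.rpow_zero, one_mul]
  calc fracLaplacianSymbol q (t • ξ)
      = t ^ (finrank ℝ E + q) * ∫ h : E,
          ‖t • h‖ ^ (-(finrank ℝ E + q)) * (1 - Real.cos (2 * Real.pi * ⟪t • h, ξ⟫)) := by
        simp only [fracLaplacianSymbol, ← integral_const_mul, ← mul_assoc, ← hscale,
          real_inner_smul_left, real_inner_smul_right]
    _ = t ^ (finrank ℝ E + q) * ((t ^ finrank ℝ E)⁻¹ * fracLaplacianSymbol q ξ) := by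
        rw [Measure.integral_comp_smul volume
          (fun h : E ↦ ‖h‖ ^ (-(finrank ℝ E + q)) * (1 - Real.cos (2 * Real.pi * ⟪h, ξ⟫))),
          abs_of_pos (by positivity), smul_eq_mul, fracLaplacianSymbol]
    _ = t ^ q * fracLaplacianSymbol q ξ := by
        rw [add_comm, Real.rpow_add ht, Real.rpow_natCast]
        field_simp

variable [Nontrivial E]

theorem integrable_fracLaplacianSymbol (hq : q ∈ Set.Ioo (0 : ℝ) 2) (ξ : E) :
    Integrable fun h : E ↦
      ‖h‖ ^ (-(finrank ℝ E + q)) * (1 - Real.cos (2 * Real.pi * ⟪h, ξ⟫)) := by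
  have hweight := integrable_min_one_norm_pow_mul_norm_rpow (volume : Measure E) (m := 2)
    hq.1 (mod_cast hq.2)
  refine (hweight.const_mul ((2 * Real.pi * (1 + ‖ξ‖ ^ 2)) ^ 2 / 2)).mono'
    (Measurable.aestronglyMeasurable (by fun_prop)) (Eventually.of_forall fun h ↦ ?_)
  have hsymbol := pow_le_pow_left₀ (norm_nonneg _) (norm_translationSymbol_le h ξ) 2
  rw [norm_translationSymbol_sq] at hsymbol
  rw [Real.norm_of_nonneg (mul_nonneg (by positivity) (sub_nonneg.2 (Real.cos_le_one _)))]
  calc ‖h‖ ^ (-(finrank ℝ E + q)) * (1 - Real.cos (2 * Real.pi * ⟪h, ξ⟫))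
      ≤ ‖h‖ ^ (-(finrank ℝ E + q)) * ((2 * Real.pi * (1 + ‖ξ‖ ^ 2) * min 1 ‖h‖) ^ 2 / 2) := by
        gcongr
        linarith
    _ = (2 * Real.pi * (1 + ‖ξ‖ ^ 2)) ^ 2 / 2 *
          (min 1 ‖h‖ ^ 2 * ‖h‖ ^ (-(finrank ℝ E + q))) := by ring

theorem fracLaplacianSymbol_pos (hq : q ∈ Set.Ioo (0 : ℝ) 2) {e : E} (he : ‖e‖ = 1) :
    0 < fracLaplacianSymbol q e := by
  have hcos (h : E) : 0 ≤ 1 - Real.cos (2 * Real.pi * ⟪h, e⟫) :=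
    sub_nonneg.2 (Real.cos_le_one _)
  rw [fracLaplacianSymbol, integral_pos_iff_support_of_nonneg
    (fun h ↦ mul_nonneg (by positivity) (hcos h)) (integrable_fracLaplacianSymbol hq e)]
  have hopen : IsOpen {h : E | 1 - Real.cos (2 * Real.pi * ⟪h, e⟫) ≠ 0} :=
    isOpen_ne_fun (by fun_prop) continuous_const
  refine (hopen.measure_pos volume ⟨(1 / 2 : ℝ) • e, ?_⟩).trans_le (measure_mono fun h hh ↦ ?_)
  · have hpi : 2 * Real.pi * ⟪(1 / 2 : ℝ) • e, e⟫ = Real.pi := by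
      rw [real_inner_smul_left, real_inner_self_eq_norm_sq, he]
      ring
    rw [Set.mem_ofPred_eq, hpi, Real.cos_pi]
    norm_num
  · have hne : h ≠ 0 := by
      rintro rfl
      simp at hh
    exact mul_ne_zero (Real.rpow_pos_of_pos (norm_pos_iff.2 hne) _).ne' hh

theorem exists_fracLaplacianSymbol_eq_mul_norm_rpow (E : Type*) [NormedAddCommGroup E]
    [InnerProductSpace ℝ E] [FiniteDimensional ℝ E] [MeasurableSpace E] [BorelSpace E]
    [Nontrivial E] (hq : q ∈ Set.Ioo (0 : ℝ) 2) :
    ∃ c : ℝ, 0 < c ∧ ∀ ξ : E, fracLaplacianSymbol q ξ = c * ‖ξ‖ ^ q := by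
  obtain ⟨e, he⟩ := exists_norm_eq E zero_le_one
  refine ⟨fracLaplacianSymbol q e, fracLaplacianSymbol_pos hq he, fun ξ ↦ ?_⟩
  rcases eq_or_ne ξ 0 with rfl | hξ
  · rw [fracLaplacianSymbol_zero, norm_zero, Real.zero_rpow hq.1.ne', mul_zero]
  · exact eq_mul_norm_rpow_of_isometry_invariant fracLaplacianSymbol_linearIsometryEquiv
      (fun t ht ↦ fracLaplacianSymbol_smul ht) he hξ

end FracLaplacianSymbol

section RieszKernel

open Module
open scoped RealInnerProductSpace

variable {E : Type*} [NormedAddCommGroup E] [InnerProductSpace ℝ E] {s : ℝ}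

/-- The kernel `h / |h|^(d + s + 1)` of the Riesz fractional gradient, for `d` the dimension
of `E`. -/
def rieszKernel (s : ℝ) (h : E) : E := ‖h‖ ^ (-(finrank ℝ E + s) - 1) • h

theorem rieszKernel_neg (h : E) : rieszKernel s (-h) = -rieszKernel s h := by
  rw [rieszKernel, norm_neg, smul_neg, rieszKernel]

theorem norm_rieszKernel (hs : 0 < s) (h : E) :
    ‖rieszKernel s h‖ = ‖h‖ ^ (-(finrank ℝ E + s)) :=
  norm_rpow_sub_one_smul (by rw [neg_ne_zero]; positivity) h

theorem measurable_rieszKernel [MeasurableSpace E] [BorelSpace E] [FiniteDimensional ℝ E] :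
    Measurable (rieszKernel s : E → E) := by
  unfold rieszKernel
  fun_prop

theorem abs_sin_le_norm_translationSymbol (h ξ : E) :
    |Real.sin (2 * Real.pi * ⟪h, ξ⟫)| ≤ ‖translationSymbol h ξ‖ := by
  rw [translationSymbol_eq, ← Complex.mk_eq_add_mul_I]
  exact Complex.abs_im_le_norm ⟨_, _⟩

theorem abs_one_sub_cos_le_norm_translationSymbol (h ξ : E) :
    |1 - Real.cos (2 * Real.pi * ⟪h, ξ⟫)| ≤ ‖translationSymbol h ξ‖ := by
  rw [translationSymbol_eq, ← Complex.mk_eq_add_mul_I]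
  exact Complex.abs_re_le_norm ⟨_, _⟩

theorem hasFDerivAt_one_sub_cos_inner (h ξ : E) :
    HasFDerivAt (fun ξ : E ↦ 1 - Real.cos (2 * Real.pi * ⟪h, ξ⟫))
      (innerSL ℝ ((2 * Real.pi * Real.sin (2 * Real.pi * ⟪h, ξ⟫)) • h)) ξ := by
  have hinner : HasFDerivAt (fun ξ : E ↦ 2 * Real.pi * ⟪h, ξ⟫) ((2 * Real.pi) • innerSL ℝ h) ξ :=
    (innerSL ℝ h).hasFDerivAt.const_mul (2 * Real.pi)
  refine (hinner.cos.const_sub 1).congr_fderiv ?_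
  ext v
  simp only [neg_apply, smul_apply, coe_innerSL_apply, smul_eq_mul, neg_mul, neg_neg, map_smul]
  ring

variable [FiniteDimensional ℝ E] [MeasurableSpace E] [BorelSpace E]

/-- The Fourier symbol of the Riesz fractional gradient, up to the factor `i μ_s`: since the
kernel is odd, only the sine part of the symbol of the difference operators survives. -/
def rieszGradientSymbol (s : ℝ) (ξ : E) : E :=
  ∫ h : E, Real.sin (2 * Real.pi * ⟪h, ξ⟫) • rieszKernel s h

variable [Nontrivial E]

theorem integrable_min_one_norm_mul_norm_rieszKernel (hs : s ∈ Set.Ioo (0 : ℝ) 1) :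
    Integrable fun h : E ↦ min 1 ‖h‖ * ‖rieszKernel s h‖ := by
  simpa only [pow_one, norm_rieszKernel hs.1] using
    integrable_min_one_norm_pow_mul_norm_rpow (volume : Measure E) (m := 1) hs.1 (mod_cast hs.2)

theorem integrable_smul_rieszKernel (hs : s ∈ Set.Ioo (0 : ℝ) 1) {c : E → ℝ} {ξ : E}
    (hc : Continuous c) (hle : ∀ h, |c h| ≤ ‖translationSymbol h ξ‖) :
    Integrable fun h : E ↦ c h • rieszKernel s h := by
  refine ((integrable_min_one_norm_mul_norm_rieszKernel hs).const_mul
    (2 * Real.pi * (1 + ‖ξ‖ ^ 2))).mono' ?_ (Eventually.of_forall fun h ↦ ?_)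
  · exact hc.aestronglyMeasurable.smul measurable_rieszKernel.aestronglyMeasurable
  · rw [norm_smul, ← mul_assoc]
    gcongr
    exact (hle h).trans (norm_translationSymbol_le h ξ)

theorem integrable_sin_smul_rieszKernel (hs : s ∈ Set.Ioo (0 : ℝ) 1) (ξ : E) :
    Integrable fun h : E ↦ Real.sin (2 * Real.pi * ⟪h, ξ⟫) • rieszKernel s h :=
  integrable_smul_rieszKernel hs (by fun_prop) (abs_sin_le_norm_translationSymbol · ξ)

theorem integrable_one_sub_cos_smul_rieszKernel (hs : s ∈ Set.Ioo (0 : ℝ) 1) (ξ : E) :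
    Integrable fun h : E ↦ (1 - Real.cos (2 * Real.pi * ⟪h, ξ⟫)) • rieszKernel s h :=
  integrable_smul_rieszKernel hs (by fun_prop) (abs_one_sub_cos_le_norm_translationSymbol · ξ)

theorem hasFDerivAt_fracLaplacianSymbol (hs : s ∈ Set.Ioo (0 : ℝ) 1) (ξ : E) :
    HasFDerivAt (fracLaplacianSymbol (s + 1))
      (innerSL ℝ ((2 * Real.pi) • rieszGradientSymbol s ξ)) ξ := by
  let G (η h : E) : E := (2 * Real.pi) • Real.sin (2 * Real.pi * ⟪h, η⟫) • rieszKernel s h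
  have hG (η : E) : Integrable (G η) := (integrable_sin_smul_rieszKernel hs η).smul _
  have hint (η : E) := integrable_fracLaplacianSymbol (q := s + 1)
    ⟨by linarith [hs.1], by linarith [hs.2]⟩ η
  have hderiv (η h : E) : HasFDerivAt
      (fun η ↦ ‖h‖ ^ (-(finrank ℝ E + (s + 1))) * (1 - Real.cos (2 * Real.pi * ⟪h, η⟫)))
      (innerSL ℝ (G η h)) η := by
    refine ((hasFDerivAt_one_sub_cos_inner h η).const_mul _).congr_fderiv ?_
    have hexponent : -(finrank ℝ E + (s + 1)) = -(finrank ℝ E + s) - 1 := by ring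
    simp only [G, rieszKernel, ← map_smul, smul_smul, hexponent]
    congr 2
    ring
  have hbound (h η : E) (hη : η ∈ Metric.ball ξ 1) : ‖innerSL ℝ (G η h)‖ ≤
      (2 * Real.pi) ^ 2 * (1 + (1 + ‖ξ‖) ^ 2) * (min 1 ‖h‖ * ‖rieszKernel s h‖) := by
    have hη' : ‖η‖ ≤ 1 + ‖ξ‖ := by
      linarith [norm_le_norm_add_norm_sub' η ξ, mem_ball_iff_norm.1 hη]
    rw [innerSL_apply_norm, norm_smul, norm_smul, Real.norm_of_nonneg Real.two_pi_pos.le]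
    calc 2 * Real.pi * (|Real.sin (2 * Real.pi * ⟪h, η⟫)| * ‖rieszKernel s h‖)
        ≤ 2 * Real.pi * (2 * Real.pi * (1 + (1 + ‖ξ‖) ^ 2) * min 1 ‖h‖ * ‖rieszKernel s h‖) := by
          gcongr
          refine (abs_sin_le_norm_translationSymbol h η).trans
            ((norm_translationSymbol_le h η).trans ?_)
          gcongr
      _ = _ := by ring
  have hmain := hasFDerivAt_integral_of_dominated_of_fderiv_le (Metric.ball_mem_nhds ξ one_pos)
    (Eventually.of_forall fun η ↦ (hint η).aestronglyMeasurable) (hint ξ)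
    ((innerSL ℝ).continuous.comp_aestronglyMeasurable (hG ξ).aestronglyMeasurable)
    (Eventually.of_forall hbound)
    ((integrable_min_one_norm_mul_norm_rieszKernel hs).const_mul _)
    (Eventually.of_forall fun h η _ ↦ hderiv η h)
  rwa [ContinuousLinearMap.integral_comp_comm _ (hG ξ), integral_smul] at hmain

theorem exists_norm_rieszGradientSymbol_eq_mul_norm_rpow (E : Type*) [NormedAddCommGroup E]
    [InnerProductSpace ℝ E] [FiniteDimensional ℝ E] [MeasurableSpace E] [BorelSpace E]
    [Nontrivial E] (hs : s ∈ Set.Ioo (0 : ℝ) 1) :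
    ∃ c : ℝ, 0 < c ∧ ∀ ξ : E, ‖rieszGradientSymbol s ξ‖ = c * ‖ξ‖ ^ s := by
  obtain ⟨c, hc, hpow⟩ := exists_fracLaplacianSymbol_eq_mul_norm_rpow E (q := s + 1)
    ⟨by linarith [hs.1], by linarith [hs.2]⟩
  refine ⟨c * (s + 1) / (2 * Real.pi), by have := hs.1; positivity, fun ξ ↦ ?_⟩
  have hderiv := (hasFDerivAt_norm_rpow ξ (p := s + 1) (by linarith [hs.1])).const_mul c
  have hgrad : (2 * Real.pi) • rieszGradientSymbol s ξ =
      (c * (s + 1)) • ‖ξ‖ ^ (s - 1) • ξ := by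
    have hunique := (hasFDerivAt_fracLaplacianSymbol hs ξ).unique
      (by simpa only [← hpow] using hderiv)
    have hexponent : s + 1 - 2 = s - 1 := by ring
    rw [hexponent, ← map_smul, ← map_smul, ← smul_smul (s + 1), smul_smul c, innerSL_inj] at hunique
    exact hunique
  have hnorm := congrArg norm hgrad
  rw [norm_smul, norm_smul, norm_rpow_sub_one_smul hs.1.ne'] at hnorm
  rw [Real.norm_of_nonneg Real.two_pi_pos.le,
    Real.norm_of_nonneg (by have := hs.1; positivity)] at hnorm
  rw [div_mul_eq_mul_div, eq_div_iff Real.two_pi_pos.ne', mul_comm, hnorm]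

end RieszKernel

section Complexification

open Module
open scoped SchwartzMap

/-- A real-valued Schwartz function, viewed as a complex-valued one. -/
def ofRealSchwartz {E : Type*} [NormedAddCommGroup E] [NormedSpace ℝ E]
    (u : 𝓢(E, ℝ)) : 𝓢(E, ℂ) :=
  SchwartzMap.postcompCLM Complex.ofRealCLM u

theorem ofRealSchwartz_apply {E : Type*} [NormedAddCommGroup E] [NormedSpace ℝ E]
    (u : 𝓢(E, ℝ)) (x : E) : ofRealSchwartz u x = u x :=
  rfl

variable (E : Type*) [NormedAddCommGroup E] [InnerProductSpace ℝ E] [FiniteDimensional ℝ E]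

/-- The isometric embedding of a Euclidean space into its complexification, realised in the
coordinates of an orthonormal basis. Plancherel's theorem needs a complex target space. -/
def complexification : E →ₗᵢ[ℝ] EuclideanSpace ℂ (Fin (finrank ℝ E)) where
  toFun x := WithLp.toLp 2 fun i ↦ ((stdOrthonormalBasis ℝ E).repr x i : ℂ)
  map_add' x y := by
    ext i
    simp
  map_smul' t x := by
    ext i
    simp
  norm_map' x := by
    rw [← (stdOrthonormalBasis ℝ E).repr.norm_map x, EuclideanSpace.norm_eq,
      EuclideanSpace.norm_eq]
    simp

end Complexification

section RieszGradient

open Module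
open scoped FourierTransform SchwartzMap RealInnerProductSpace

variable {E : Type*} [NormedAddCommGroup E] [InnerProductSpace ℝ E] [FiniteDimensional ℝ E]
  [MeasurableSpace E] [BorelSpace E]

theorem muS_pos (d : ℕ) {s : ℝ} (hs : s ∈ Set.Ioo (0 : ℝ) 1) : 0 < muS d s := by
  have hs0 := hs.1
  have hden : 0 < Real.Gamma ((1 - s) / 2) := Real.Gamma_pos_of_pos (by linarith [hs.2])
  unfold muS
  positivity

/-- The Riesz fractional gradient on an arbitrary Euclidean space. -/
def rieszGradient (s : ℝ) (u : E → ℝ) (x : E) : E :=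
  muS (finrank ℝ E) s • ∫ y, (u x - u y) • rieszKernel s (x - y)

theorem fracGrad_eq_rieszGradient (d : ℕ) (s : ℝ) : fracGrad d s = rieszGradient s := by
  ext1 u
  ext1 x
  simp only [fracGrad, rieszGradient, rieszKernel, finrank_euclideanSpace_fin,
    ← Real.rpow_neg (norm_nonneg _), neg_add, sub_eq_add_neg, smul_comm (u x + _)]

theorem norm_rieszGradient_sq (s : ℝ) (u : E → ℝ) (x : E) :
    ‖rieszGradient s u x‖ ^ 2 =
      muS (finrank ℝ E) s ^ 2 * ‖∫ h, (u x - u (x - h)) • rieszKernel s h‖ ^ 2 := by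
  rw [rieszGradient, norm_smul, mul_pow, Real.norm_eq_abs, sq_abs,
    ← integral_sub_left_eq_self _ volume x]
  simp only [sub_sub_cancel]

variable [Nontrivial E] {s : ℝ}

theorem differenceSymbol_comp_rieszKernel (hs : s ∈ Set.Ioo (0 : ℝ) 1)
    {V : Type*} [NormedAddCommGroup V] [InnerProductSpace ℂ V] [CompleteSpace V]
    (J : E →ₗᵢ[ℝ] V) (ξ : E) :
    differenceSymbol (J ∘ rieszKernel s) ξ = Complex.I • J (rieszGradientSymbol s ξ) := by
  let a (h : E) : E := (1 - Real.cos (2 * Real.pi * ⟪h, ξ⟫)) • rieszKernel s h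
  let b (h : E) : E := Real.sin (2 * Real.pi * ⟪h, ξ⟫) • rieszKernel s h
  have hb : Integrable b := integrable_sin_smul_rieszKernel hs ξ
  have ha : Integrable a := integrable_one_sub_cos_smul_rieszKernel hs ξ
  have hodd : ∫ h, a h = 0 := by
    have : IsAddTorsionFree E := IsAddTorsionFree.of_isTorsionFree ℝ E
    refine self_eq_neg.1 ?_
    rw [← integral_neg, ← integral_neg_eq_self]
    simp only [a, rieszKernel_neg, inner_neg_left, mul_neg, Real.cos_neg, smul_neg]
  have hsplit (h : E) : translationSymbol h ξ • J (rieszKernel s h) =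
      J (a h) + Complex.I • J (b h) := by
    simp only [a, b, map_smul]
    rw [translationSymbol_eq, add_smul, mul_comm _ Complex.I, mul_smul, Complex.coe_smul,
      Complex.coe_smul]
  calc differenceSymbol (J ∘ rieszKernel s) ξ
      = ∫ h, (J (a h) + Complex.I • J (b h)) := by
        simp only [differenceSymbol, Function.comp_apply, hsplit]
    _ = J (∫ h, a h) + Complex.I • J (∫ h, b h) := by
        have hJa : Integrable fun h ↦ J (a h) := J.toContinuousLinearMap.integrable_comp ha
        have hJb : Integrable fun h ↦ Complex.I • J (b h) :=
          (J.toContinuousLinearMap.integrable_comp hb).smul Complex.I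
        rw [integral_add hJa hJb, integral_smul, J.integral_comp_comm,
          J.integral_comp_comm]
    _ = Complex.I • J (rieszGradientSymbol s ξ) := by
        rw [hodd, map_zero, zero_add, rieszGradientSymbol]

theorem integral_norm_rieszGradient_sq (hs : s ∈ Set.Ioo (0 : ℝ) 1) (u : 𝓢(E, ℝ)) :
    ∫ x, ‖rieszGradient s u x‖ ^ 2 = muS (finrank ℝ E) s ^ 2 *
      ∫ ξ, ‖rieszGradientSymbol s ξ‖ ^ 2 * ‖𝓕 (ofRealSchwartz u) ξ‖ ^ 2 := by
  let J := complexification E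
  let f := ofRealSchwartz u
  have hk : AEStronglyMeasurable (J ∘ rieszKernel s) :=
    J.continuous.comp_aestronglyMeasurable measurable_rieszKernel.aestronglyMeasurable
  have hint : Integrable fun h : E ↦ min 1 ‖h‖ * ‖(J ∘ rieszKernel s) h‖ := by
    simpa only [Function.comp_apply, J.norm_map] using
      integrable_min_one_norm_mul_norm_rieszKernel hs
  have hcomplex (x : E) : ‖∫ h, (u x - u (x - h)) • rieszKernel s h‖ =
      ‖∫ h, (f x - f (x - h)) • (J ∘ rieszKernel s) h‖ := by
    rw [← J.norm_map, ← J.integral_comp_comm]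
    simp only [f, ofRealSchwartz_apply, ← Complex.ofReal_sub, Complex.coe_smul, map_smul,
      Function.comp_apply]
  simp only [norm_rieszGradient_sq, integral_const_mul, hcomplex]
  rw [integral_norm_sq_integral_sub_translate_smul hk hint f]
  simp only [differenceSymbol_comp_rieszKernel hs J, norm_smul, Complex.norm_I, one_mul,
    J.norm_map, f]

theorem integral_integral_sq_sub_div_norm_rpow (hs : s ∈ Set.Ioo (0 : ℝ) 1) (u : 𝓢(E, ℝ)) :
    ∫ x, ∫ y, (u x - u y) ^ 2 / ‖x - y‖ ^ (finrank ℝ E + 2 * s) =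
      2 * ∫ ξ, fracLaplacianSymbol (2 * s) ξ * ‖𝓕 (ofRealSchwartz u) ξ‖ ^ 2 := by
  let f := ofRealSchwartz u
  let w (h : E) : ℝ := ‖h‖ ^ (-(finrank ℝ E + 2 * s))
  have hw : Measurable w := by fun_prop
  have hint : Integrable fun h : E ↦ min 1 ‖h‖ ^ 2 * w h :=
    integrable_min_one_norm_pow_mul_norm_rpow volume (by linarith [hs.1])
      (by push_cast; linarith [hs.2])
  have hsymbol (ξ : E) : ∫ h, w h * ‖translationSymbol h ξ‖ ^ 2 =
      2 * fracLaplacianSymbol (2 * s) ξ := by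
    simp only [norm_translationSymbol_sq, mul_left_comm (w _), integral_const_mul,
      fracLaplacianSymbol, w]
  have htranslate (x : E) : ∫ y, (u x - u y) ^ 2 / ‖x - y‖ ^ (finrank ℝ E + 2 * s) =
      ∫ h, w h * ‖f x - f (x - h)‖ ^ 2 := by
    rw [← integral_sub_left_eq_self _ volume x]
    simp only [sub_sub_cancel, w, f, ofRealSchwartz_apply, ← Complex.ofReal_sub,
      Complex.norm_real, Real.norm_eq_abs, sq_abs, Real.rpow_neg (norm_nonneg _), div_eq_inv_mul]
  simp only [htranslate]
  rw [integral_integral_mul_norm_sub_translate_sq hw.aestronglyMeasurable hint f]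
  simp only [hsymbol, mul_assoc, integral_const_mul, f]

end RieszGradient

theorem stmt16_general (E : Type*) [NormedAddCommGroup E] [InnerProductSpace ℝ E]
    [FiniteDimensional ℝ E] [Nontrivial E] [MeasurableSpace E] [BorelSpace E] {s : ℝ}
    (hs : s ∈ Set.Ioo (0 : ℝ) 1) :
    ∃ C : ℝ, 0 < C ∧ ∀ u : SchwartzMap E ℝ,
      ∫ x, ∫ y, (u x - u y) ^ 2 / ‖x - y‖ ^ (Module.finrank ℝ E + 2 * s) =
        C * ∫ x, ‖rieszGradient s u x‖ ^ 2 := by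
  obtain ⟨a, ha, hlaplacian⟩ := exists_fracLaplacianSymbol_eq_mul_norm_rpow E (q := 2 * s)
    ⟨by linarith [hs.1], by linarith [hs.2]⟩
  obtain ⟨b, hb, hgradient⟩ := exists_norm_rieszGradientSymbol_eq_mul_norm_rpow E hs
  have hmu := muS_pos (Module.finrank ℝ E) hs
  refine ⟨2 * a / (muS (Module.finrank ℝ E) s * b) ^ 2, by positivity, fun u ↦ ?_⟩
  have hpow (ξ : E) : (‖ξ‖ ^ s) ^ 2 = ‖ξ‖ ^ (2 * s) := by
    rw [← Real.rpow_mul_natCast (norm_nonneg ξ), Nat.cast_two, mul_comm]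
  rw [integral_integral_sq_sub_div_norm_rpow hs, integral_norm_rieszGradient_sq hs]
  simp only [hlaplacian, hgradient, mul_pow, hpow, mul_assoc, integral_const_mul]
  field_simp

/-- The squared Gagliardo seminorm equals a dimensional constant times the squared
`L²` norm of the Riesz fractional gradient, for all `u ∈ C_c^∞(ℝ^d)`. -/
theorem stmt16 (d : ℕ) (hd : 1 ≤ d) (s : ℝ) (hs : s ∈ Set.Ioo (0 : ℝ) 1) :
    ∃ C : ℝ, 0 < C ∧
      ∀ u : EuclideanSpace ℝ (Fin d) → ℝ,
        ContDiff ℝ (⊤ : ℕ∞) u → HasCompactSupport u →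
        ∫ x, ∫ y, (u x - u y) ^ 2 / ‖x - y‖ ^ ((d : ℝ) + 2 * s) =
          C * ∫ x, ‖fracGrad d s u x‖ ^ 2 := by
  have : Nonempty (Fin d) := ⟨⟨0, hd⟩⟩
  obtain ⟨C, hC, hgeneral⟩ := stmt16_general (EuclideanSpace ℝ (Fin d)) hs
  simp only [finrank_euclideanSpace_fin, ← fracGrad_eq_rieszGradient] at hgeneral
  exact ⟨C, hC, fun u hu hc ↦ hgeneral (hc.toSchwartzMap hu)⟩

end
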